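/- (Second orthogonality relation.) For integers m, n ≥ 0 and integers i, j, i', j' with 0 ≤ i, i' ≤ m, 0 ≤ j, j' ≤ n and i+j = i'+j', the following identity holds in ℚ: Σ_{k=0}^{min(m,n)} (-1)^k · c_{m,n,k}(i, j) · c_{m,n,k}(m−i', n−j') / D(m, n, k) = δ_{i,i'}·δ_{j,j'}, where δ denotes the Kronecker delta (note D(m,n,k) > 0 for 0 ≤ k ≤ min(m,n)). -/

import Mathlib

/-- Binomial coefficient for integer arguments: `C a b = a.choose b` when
`0 ≤ b ≤ a`, and `0` otherwise. -/
def C (a b : ℤ) : ℤ := if 0 ≤ b ∧ b ≤ a then (a.toNat.choose b.toNat : ℤ) else 0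

/-- The coordinate function `c_{m,n,k}(i,j)`. -/
def c (m n k i j : ℤ) : ℤ :=
  ∑ l ∈ Finset.range (k.toNat + 1),
    (-1 : ℤ) ^ l * C (i + j - k) (i - l) * C (m - l) (k - l) * C (n - k + l) l

/-- The normalizing factor `D(m,n,k)`. -/
def D (m n k : ℤ) : ℤ := C (m + n - k + 1) k * C (m + n - 2 * k) (m - k)

/-!
The coordinate functions are Clebsch–Gordan coefficients for `sl₂`. Realise `V_m ⊗ V_n` as
`ℚ[x, y] / (x ^ (m + 1), y ^ (n + 1))`, where `F` is multiplication by `x + y` and `E` sends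
`x ^ i * y ^ j` to `i (m - i + 1) x ^ (i - 1) y ^ j + j (n - j + 1) x ^ i y ^ (j - 1)`. The polynomial
`Q_k = ∑ l, (-1) ^ l C(m - l, k - l) C(n - k + l, l) x ^ l y ^ (k - l)` is killed by `E` (`q_rec`), and
`c m n k i j` is the coefficient of `x ^ i * y ^ j` in `F ^ (i + j - k) Q_k` (`c_eq_u`).

Both `E` and `F` are self-adjoint for the pairing "coefficient of `x ^ m * y ^ n` in the product"
(`pair_E`, `pair_F`). Together with the formula for `E F ^ (t + 1) Q_k` (`u_rec`) this gives the first
orthogonality relation: vectors of complementary degrees built from `Q_k` and `Q_k'` are orthogonal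
for `k ≠ k'` (`pair_of_ne`), and pair to `(-1) ^ k D(m, n, k)` for `k = k'` (`pair_self`).

In a fixed degree the first relation says that one square matrix is a left inverse of another; it is
then a right inverse too, and that is the second relation. The indices `k` outside the range of the
square matrix contribute zero.
-/


/-! ### The coefficient function `C` -/

theorem C_nat (a b : ℕ) : C a b = a.choose b := by
  unfold C
  split_ifs with h
  · simp
  · rw [Nat.choose_eq_zero_of_lt (by omega)]; rfl

theorem C_of_neg (a : ℤ) {b : ℤ} (h : b < 0) : C a b = 0 := by
  rw [C, if_neg (by omega)]

theorem C_of_lt {a b : ℤ} (h : a < b) : C a b = 0 := by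
  rw [C, if_neg (by omega)]

theorem C_succ (t : ℕ) (b : ℤ) : C ((t + 1 : ℕ) : ℤ) b = C t b + C t (b - 1) := by
  rcases lt_trichotomy b 0 with h | rfl | h
  · rw [C_of_neg _ h, C_of_neg _ h, C_of_neg _ (by omega)]; rfl
  · rw [C_of_neg _ (show (0 : ℤ) - 1 < 0 by omega)]
    have h1 := C_nat (t + 1) 0
    have h2 := C_nat t 0
    simp_all
  · obtain ⟨b, rfl⟩ : ∃ b' : ℕ, b = ((b' + 1 : ℕ) : ℤ) := ⟨(b - 1).toNat, by omega⟩
    rw [show ((b + 1 : ℕ) : ℤ) - 1 = b by omega, C_nat, C_nat, C_nat, Nat.choose_succ_succ]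
    push_cast; ring

/-! ### The vectors `(x + y) ^ t * Q_k` -/

/-- The coefficient of `x ^ l * y ^ (k - l)` in the homogeneous polynomial `Q_k` of degree `k`.
It vanishes unless `0 ≤ l ≤ k`, so the junk value of `Int.toNat` at negative `l` is harmless. -/
def q (m n k : ℕ) (l : ℤ) : ℚ :=
  (-1) ^ l.toNat * (C (m - l) (k - l) : ℚ) * (C (n - k + l) l : ℚ)

/-- The coefficient of `x ^ i * y ^ (k + t - i)` in `(x + y) ^ t * Q_k`, computed by multiplying
by `x + y` one factor at a time. The degree `k + t` is not recorded in the function itself. -/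
def u (m n k : ℕ) : ℕ → ℤ → ℚ
  | 0, i => q m n k i
  | t + 1, i => u m n k t i + u m n k t (i - 1)

theorem q_of_neg (m n k : ℕ) {l : ℤ} (h : l < 0) : q m n k l = 0 := by
  simp [q, C_of_neg _ h]

theorem q_of_lt (m n k : ℕ) {l : ℤ} (h : (k : ℤ) < l) : q m n k l = 0 := by
  simp [q, C_of_neg _ (show (k : ℤ) - l < 0 by omega)]

theorem q_nat (a b l d : ℕ) :
    q (l + d + a) (l + d + b) (l + d) l = (-1) ^ l * ((a + d).choose d * (b + l).choose l : ℕ) := by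
  rw [q, show ((l + d + a : ℕ) : ℤ) - l = (a + d : ℕ) by push_cast; ring,
    show ((l + d : ℕ) : ℤ) - l = d by push_cast; ring,
    show ((l + d + b : ℕ) : ℤ) - (l + d : ℕ) + l = (b + l : ℕ) by push_cast; ring, C_nat, C_nat]
  push_cast; simp; ring

/-- `E Q_k = 0`, read off at `x ^ l * y ^ (k - 1 - l)`. -/
theorem q_rec {m n k : ℕ} (hm : k ≤ m) (hn : k ≤ n) (l : ℤ) :
    (l + 1) * (m - l) * q m n k (l + 1) + (k - l) * (n - k + l + 1) * q m n k l = 0 := by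
  rcases lt_or_ge l 0 with h | h
  · rw [q_of_neg _ _ _ h]
    rcases eq_or_ne l (-1) with rfl | h'
    · simp
    · rw [q_of_neg _ _ _ (by omega)]; simp
  rcases lt_or_ge l k with h' | h'
  · lift l to ℕ using h
    obtain ⟨d, rfl⟩ := Nat.exists_eq_add_of_lt (show l < k by omega)
    obtain ⟨a, rfl⟩ := Nat.exists_eq_add_of_le hm
    obtain ⟨b, rfl⟩ := Nat.exists_eq_add_of_le hn
    have e1 := q_nat a b l (d + 1)
    have e2 := q_nat a b (l + 1) d
    rw [show l + 1 + d = l + d + 1 by ring] at e2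
    rw [show l + (d + 1) = l + d + 1 by ring] at e1
    have h1 := Nat.add_one_mul_choose_eq (a + d) d
    have h2 := Nat.add_one_mul_choose_eq (b + l) l
    rw [show (l : ℤ) + 1 = (l + 1 : ℕ) by push_cast; ring, e1, e2, ← add_assoc a d 1,
      ← add_assoc b l 1]
    qify at h1 h2
    push_cast
    rw [pow_succ]
    linear_combination (-1 : ℚ) ^ l * (d + 1) * ((a + d + 1).choose (d + 1) : ℚ) * h2 -
      (-1 : ℚ) ^ l * (l + 1) * ((b + l + 1).choose (l + 1) : ℚ) * h1
  · rw [q_of_lt _ _ _ (show (k : ℤ) < l + 1 by omega)]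
    rcases eq_or_ne l k with rfl | h''
    · simp
    · rw [q_of_lt _ _ _ (by omega)]; simp

theorem u_of_neg (m n k t : ℕ) {i : ℤ} (h : i < 0) : u m n k t i = 0 := by
  induction t generalizing i with
  | zero => exact q_of_neg _ _ _ h
  | succ t ih => rw [u, ih h, ih (by omega), add_zero]

theorem u_of_lt (m n k t : ℕ) {i : ℤ} (h : (k + t : ℤ) < i) : u m n k t i = 0 := by
  induction t generalizing i with
  | zero => exact q_of_lt _ _ _ (by simpa using h)
  | succ t ih => push_cast at h; rw [u, ih (by omega), ih (by omega), add_zero]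

theorem u_eq_sum (m n k t : ℕ) (i : ℤ) :
    u m n k t i = ∑ l ∈ Finset.range (k + 1), q m n k l * (C t (i - l) : ℚ) := by
  induction t generalizing i with
  | zero =>
    have hC (l : ℕ) : (C (0 : ℕ) (i - l) : ℚ) = if i = l then 1 else 0 := by
      split_ifs with h
      · subst h; simp [C]
      · rw [C, if_neg (by push_cast; omega)]; rfl
    simp only [hC, u, mul_ite, mul_one, mul_zero]
    by_cases h : 0 ≤ i ∧ i ≤ k
    · obtain ⟨h1, h2⟩ := h
      lift i to ℕ using h1
      simp only [Nat.cast_inj]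
      rw [Finset.sum_ite_eq, if_pos (by simp; omega)]
    · rw [Finset.sum_eq_zero]
      · rcases lt_or_ge i 0 with h' | h'
        · exact q_of_neg _ _ _ h'
        · exact q_of_lt _ _ _ (by omega)
      · intro l hl
        rw [Finset.mem_range] at hl
        rw [if_neg (by omega)]
  | succ t ih =>
    rw [u, ih, ih, ← Finset.sum_add_distrib]
    refine Finset.sum_congr rfl fun l _ => ?_
    rw [C_succ, show i - 1 - (l : ℤ) = i - l - 1 by ring]
    push_cast; ring

theorem c_eq_u (m n k t i j : ℕ) (h : i + j = k + t) : (c m n k i j : ℚ) = u m n k t i := by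
  rw [u_eq_sum, c]
  push_cast
  refine Finset.sum_congr (by simp) fun l _ => ?_
  rw [q, show (i : ℤ) + j - k = t by omega, Int.toNat_natCast]
  ring

theorem c_eq_zero (m n k i j : ℕ) (h : i + j < k) : c m n k i j = 0 := by
  rw [c]
  refine Finset.sum_eq_zero fun l _ => ?_
  have : C ((i : ℤ) + j - k) (i - l) = 0 := by rw [C, if_neg (by omega)]
  rw [this]; ring

/-- `E ((x + y) ^ (t + 1) * Q_k) = (t + 1) * (m + n - 2 * k - t) * (x + y) ^ t * Q_k`, read off at
`x ^ i * y ^ (k + t - i)`. The induction step is the commutation relation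
`[E, F] = m + n - 2 * s` in degree `s`. -/
theorem u_rec {m n k : ℕ} (hm : k ≤ m) (hn : k ≤ n) (t : ℕ) (i : ℤ) :
    (i + 1) * (m - i) * u m n k (t + 1) (i + 1) +
      (k + t + 1 - i) * (n - k - t + i) * u m n k (t + 1) i =
      (t + 1) * (m + n - 2 * k - t) * u m n k t i := by
  induction t generalizing i with
  | zero =>
    have h1 := q_rec hm hn i
    have h2 := q_rec hm hn (i - 1)
    simp only [u, add_sub_cancel_right, sub_add_cancel] at h2 ⊢
    push_cast at h1 h2 ⊢
    linear_combination h1 + h2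
  | succ t ih =>
    have h1 := ih i
    have h2 := ih (i - 1)
    have e1 : u m n k (t + 1 + 1) (i + 1) = u m n k (t + 1) (i + 1) + u m n k (t + 1) i := by
      rw [u, add_sub_cancel_right]
    have e2 : u m n k (t + 1 + 1) i = u m n k (t + 1) i + u m n k (t + 1) (i - 1) := by rw [u]
    have e3 : u m n k (t + 1) i = u m n k t i + u m n k t (i - 1) := by rw [u]
    rw [sub_add_cancel] at h2
    push_cast at h1 h2 ⊢
    rw [e1, e2]
    linear_combination h1 + h2 - (t + 1) * (m + n - 2 * k - t : ℚ) * e3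

/-! ### The pairing and the first orthogonality relation -/

/-- The pairing `⟨f, g⟩` of two homogeneous polynomials of complementary degrees `s` and
`m + n - s`: the coefficient of `x ^ m * y ^ n` in the product. A polynomial is given by its
coefficients, indexed by the exponent of `x`. -/
def pair (m : ℕ) (f g : ℤ → ℚ) : ℚ := ∑ i ∈ Finset.range (m + 1), f i * g (m - i)

/-- `F`, multiplication by `x + y`, is self-adjoint for the pairing. -/
theorem pair_F (m n k t k' t' : ℕ) :
    pair m (u m n k (t + 1)) (u m n k' t') = pair m (u m n k t) (u m n k' (t' + 1)) := by
  have hs : ∑ i ∈ Finset.range (m + 1), u m n k t ((i : ℤ) - 1) * u m n k' t' (m - i) =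
      ∑ i ∈ Finset.range (m + 1), u m n k t i * u m n k' t' (m - i - 1) := by
    rw [Finset.sum_range_succ', Finset.sum_range_succ]
    rw [u_of_neg _ _ _ _ (show ((0 : ℕ) : ℤ) - 1 < 0 by simp),
      u_of_neg _ _ _ _ (show (m : ℤ) - m - 1 < 0 by simp), zero_mul, mul_zero]
    congr 1
    refine Finset.sum_congr rfl fun i _ => ?_
    push_cast
    congr 2 <;> ring
  simp only [pair, u, add_mul, mul_add, Finset.sum_add_distrib, hs]

theorem pair_move (m n k t k' : ℕ) (t' : ℕ) :
    pair m (u m n k (t + t')) (u m n k' 0) = pair m (u m n k t) (u m n k' t') := by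
  induction t' generalizing t with
  | zero => rfl
  | succ t' ih => rw [← pair_F, ← ih]; congr 2; ring

/-- `E` is self-adjoint for the pairing. In degree `s + 1` it acts by
`(E f) i = (i + 1) * (m - i) * f (i + 1) + w i * f i` with `w i = (s + 1 - i) * (n - s + i)`, and in
the complementary degree the weight `w i` becomes `w (m - i)`. -/
theorem pair_E (m : ℕ) (w : ℤ → ℚ) (f g : ℤ → ℚ) :
    pair m (fun i => (i + 1) * (m - i) * f (i + 1) + w i * f i) g =
      pair m f (fun i => (i + 1) * (m - i) * g (i + 1) + w (m - i) * g i) := by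
  have hs : ∑ i ∈ Finset.range (m + 1), ((i : ℚ) + 1) * (m - i) * f (i + 1) * g (m - i) =
      ∑ i ∈ Finset.range (m + 1), f i * ((m - i + 1) * i * g (m - i + 1)) := by
    rw [Finset.sum_range_succ, Finset.sum_range_succ' _ m]
    simp only [sub_self, mul_zero, zero_mul, add_zero, Nat.cast_zero]
    refine Finset.sum_congr rfl fun i _ => ?_
    push_cast
    rw [show (m : ℤ) - (i + 1) + 1 = m - i by ring]
    ring
  have hw : ∑ i ∈ Finset.range (m + 1), w i * f i * g (m - i) =
      ∑ i ∈ Finset.range (m + 1), f i * (w (m - (m - i)) * g (m - i)) :=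
    Finset.sum_congr rfl fun i _ => by rw [sub_sub_cancel]; ring
  unfold pair
  trans (∑ i ∈ Finset.range (m + 1), ((i : ℚ) + 1) * (m - i) * f (i + 1) * g (m - i)) +
    ∑ i ∈ Finset.range (m + 1), w i * f i * g (m - i)
  · rw [← Finset.sum_add_distrib]
    refine Finset.sum_congr rfl fun i _ => ?_
    push_cast; ring
  · rw [hs, hw, ← Finset.sum_add_distrib]
    refine Finset.sum_congr rfl fun i _ => ?_
    push_cast; ring

theorem pair_smul_left (m : ℕ) (a : ℚ) (f g : ℤ → ℚ) :
    pair m (fun i => a * f i) g = a * pair m f g := by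
  simp only [pair, Finset.mul_sum, mul_assoc]

theorem pair_smul_right (m : ℕ) (a : ℚ) (f g : ℤ → ℚ) :
    pair m f (fun i => a * g i) = a * pair m f g := by
  simp only [pair, Finset.mul_sum, mul_left_comm]

/-- Off-diagonal orthogonality: evaluating `⟨E F ^ (t + 1) Q_k, F ^ t' Q_k'⟩` by moving `E` across
gives two different multiples of the same pairing when `k ≠ k'`. -/
theorem pair_of_ne {m n k t k' t' : ℕ} (hm : k ≤ m) (hn : k ≤ n) (hm' : k' ≤ m) (hn' : k' ≤ n)
    (hd : k + t + k' + t' = m + n) (hne : k ≠ k') :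
    pair m (u m n k t) (u m n k' t') = 0 := by
  have hE := pair_E m (fun i => (k + t + 1 - i) * (n - k - t + i)) (u m n k (t + 1))
    (u m n k' t')
  have hd' : (k : ℚ) + t + k' + t' = m + n := by exact_mod_cast hd
  simp only [u_rec hm hn] at hE
  rw [pair_smul_left] at hE
  have hR : pair m (u m n k (t + 1)) (fun i : ℤ => ((i : ℚ) + 1) * (m - i) * u m n k' t' (i + 1) +
      (k + t + 1 - (m - i : ℤ)) * (n - k - t + (m - i : ℤ)) * u m n k' t' i) =
      t' * (m + n - 2 * k' - t' + 1) * pair m (u m n k t) (u m n k' t') := by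
    cases t' with
    | zero =>
      have h0 : (fun i : ℤ => ((i : ℚ) + 1) * (m - i) * u m n k' 0 (i + 1) +
          (k + t + 1 - (m - i : ℤ)) * (n - k - t + (m - i : ℤ)) * u m n k' 0 i) = fun _ => 0 := by
        funext i
        have := q_rec hm' hn' i
        simp only [u]
        push_cast at hd' ⊢
        rw [← this, show (m : ℚ) = k + t + k' - n by linear_combination -hd']
        ring
      rw [h0]; simp [pair]
    | succ t' =>
      rw [← pair_F, ← pair_smul_right]
      congr 1
      funext i
      have := u_rec hm' hn' t' i
      push_cast at hd' ⊢
      rw [show (m : ℚ) = k + t + k' + (t' + 1) - n by linear_combination -hd'] at this ⊢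
      linear_combination this
  rw [hR] at hE
  -- The two scalars differ by
  -- `(t + 1) * (m + n - 2 * k - t) - t' * (m + n - 2 * k' - t' + 1) = (k' - k) * (t + 1 + t')`.
  have h2 : ((k' : ℚ) - k) * (t + 1 + t') * pair m (u m n k t) (u m n k' t') = 0 := by
    have : (m : ℚ) = k + t + k' + t' - n := by linear_combination -hd'
    rw [this] at hE
    linear_combination hE
  have h3 : ((k' : ℚ) - k) ≠ 0 := sub_ne_zero.2 (by exact_mod_cast hne.symm)
  have h4 : ((t : ℚ) + 1 + t') ≠ 0 := by positivity
  simpa [h3, h4] using h2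

/-! ### The norm of `Q_k` -/

/-- With `m = k + a` and `n = k + b`, the polynomial `F ^ (a + b + 1) Q_k` is in the ideal
`(x ^ (m + 1), y ^ (n + 1))`: its coefficients at `x ^ i` with `a < i ≤ m` vanish. `E` kills it, and
the resulting two-term recursion starts at `i = a` with a zero factor. -/
theorem u_top_vanish (a b k d : ℕ) (hd : d < k) :
    u (k + a) (k + b) k (a + b + 1) (a + d + 1 : ℕ) = 0 := by
  have h := u_rec (m := k + a) (n := k + b) (k := k) (by omega) (by omega) (a + b) (a + d : ℕ)
  have hk : (k : ℚ) - d ≠ 0 := sub_ne_zero.2 (by exact_mod_cast hd.ne')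
  have ha : (a : ℚ) + d + 1 ≠ 0 := by positivity
  have hz : ((a : ℚ) + d + 1) * (k - d) * u (k + a) (k + b) k (a + b + 1) (a + d + 1 : ℕ) = 0 := by
    cases d with
    | zero => push_cast at h ⊢; linear_combination h
    | succ d =>
      have ih := u_top_vanish a b k d (by omega)
      rw [add_assoc a d 1] at ih
      rw [ih] at h
      push_cast at h ⊢
      linear_combination h
  simpa [hk, ha] using hz

/-- Modulo `(x ^ (m + 1), y ^ (n + 1))`, `F` kills the top vector `F ^ (m + n - 2 * k) Q_k`, so its
coefficients alternate in sign. -/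
theorem u_alternating (a b k l : ℕ) (hl : l ≤ k) :
    u (k + a) (k + b) k (a + b) ((k + a : ℕ) - l) =
      (-1) ^ l * u (k + a) (k + b) k (a + b) (k + a : ℕ) := by
  induction l with
  | zero => simp
  | succ l ih =>
    have h := u_top_vanish a b k (k - l - 1) (by omega)
    rw [u, show ((a + (k - l - 1) + 1 : ℕ) : ℤ) = (k + a : ℕ) - l by omega, ih (by omega)] at h
    rw [show ((k + a : ℕ) : ℤ) - (l + 1 : ℕ) = (k + a : ℕ) - l - 1 by push_cast; ring, pow_succ]
    linear_combination h

/-- The `k`-th finite difference of `x ↦ x.choose k` is `1`. -/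
theorem alternating_sum (b k : ℕ) :
    ∑ l ∈ Finset.range (k + 1), (-1 : ℚ) ^ l * (k.choose l * (b + l).choose k : ℕ) =
      (-1) ^ k := by
  have h := fwdDiff_iter_eq_sum_shift (1 : ℕ) (fun x => ((x.choose (k + 0) : ℕ) : ℤ)) k b
  rw [fwdDiff_iter_choose 0 k] at h
  simp only [Nat.choose_zero_right, add_zero, smul_eq_mul, mul_one] at h
  have h' := congrArg (fun z : ℤ => (-1 : ℚ) ^ k * z) h
  simp only [Nat.cast_one, Int.cast_one, mul_one] at h'
  rw [h', Int.cast_sum, Finset.mul_sum]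
  refine Finset.sum_congr rfl fun l hl => ?_
  obtain ⟨d, rfl⟩ := Nat.exists_eq_add_of_le (Nat.lt_succ_iff.1 (Finset.mem_range.1 hl))
  rw [Nat.add_sub_cancel_left]
  push_cast
  have : (-1 : ℚ) ^ d * (-1) ^ d = 1 := by rw [← mul_pow]; simp
  rw [pow_add]
  linear_combination (-(-1 : ℚ) ^ l * ((l + d).choose l : ℚ) * ((b + l).choose (l + d) : ℚ)) * this

theorem choose_identity (a b l d : ℕ) :
    (a + d).choose d * (b + l).choose l * (a + b).choose (a + d) =
      (a + b).choose a * ((l + d).choose l * (b + l).choose (l + d)) := by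
  have h1 := Nat.choose_mul (n := a + b) (k := a + d) (s := a) (by omega)
  have h2 := Nat.choose_mul (n := b + l) (k := l + d) (s := l) (by omega)
  rw [Nat.add_sub_cancel_left, Nat.add_sub_cancel_left] at h1
  rw [Nat.add_sub_cancel, Nat.add_sub_cancel_left] at h2
  rw [Nat.choose_symm_add (a := a) (b := d)] at h1
  calc _ = (a + b).choose (a + d) * (a + d).choose d * (b + l).choose l := by ring
    _ = (a + b).choose a * ((b + l).choose l * b.choose d) := by rw [h1]; ring
    _ = _ := by rw [← h2]; ring

theorem u_top (a b k : ℕ) :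
    u (k + a) (k + b) k (a + b) (k + a : ℕ) = (-1) ^ k * (a + b).choose a := by
  rw [u_eq_sum, ← alternating_sum b k, Finset.sum_mul]
  refine Finset.sum_congr rfl fun l hl => ?_
  obtain ⟨d, rfl⟩ := Nat.exists_eq_add_of_le (Nat.lt_succ_iff.1 (Finset.mem_range.1 hl))
  rw [q_nat, show ((l + d + a : ℕ) : ℤ) - l = (a + d : ℕ) by push_cast; ring, C_nat]
  have h := choose_identity a b l d
  qify at h
  push_cast
  linear_combination (-1 : ℚ) ^ l * h

/-- The coefficient of `X ^ k` in `(1 - X)⁻¹ ^ (b + 1) * (1 - X)⁻¹ ^ (a + 1)`. -/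
theorem choose_convolution (a b k : ℕ) :
    ∑ l ∈ Finset.range (k + 1), (a + (k - l)).choose (k - l) * (b + l).choose l =
      (a + b + 1 + k).choose k := by
  have h := congrArg (fun f => PowerSeries.coeff k (f : PowerSeries ℤ))
    (congrArg Units.val (PowerSeries.invOneSubPow_add ℤ (b + 1) (a + 1)))
  rw [show b + 1 + (a + 1) = (a + b + 1) + 1 by ring] at h
  simp only [Units.val_mul, PowerSeries.invOneSubPow_val_succ_eq_mk_add_choose,
    PowerSeries.coeff_mul, PowerSeries.coeff_mk] at h
  rw [Finset.Nat.sum_antidiagonal_eq_sum_range_succ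
    (fun i j => ((b + i).choose b : ℤ) * ((a + j).choose a : ℤ))] at h
  rw [← Nat.choose_symm_add (a := a + b + 1) (b := k)]
  zify
  rw [h]
  refine Finset.sum_congr rfl fun l _ => ?_
  rw [Nat.choose_symm_add (a := a), Nat.choose_symm_add (a := b), mul_comm]

theorem D_eq (a b k : ℕ) : D (k + a : ℕ) (k + b : ℕ) k =
    ((a + b + 1 + k).choose k * (a + b).choose a : ℕ) := by
  rw [D, show ((k + a : ℕ) : ℤ) + (k + b : ℕ) - k + 1 = (a + b + 1 + k : ℕ) by push_cast; ring,
    show ((k + a : ℕ) : ℤ) + (k + b : ℕ) - 2 * k = (a + b : ℕ) by push_cast; ring,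
    show ((k + a : ℕ) : ℤ) - k = a by push_cast; ring, C_nat, C_nat]
  push_cast; rfl

theorem D_ne_zero {m n k : ℕ} (hm : k ≤ m) (hn : k ≤ n) : (D m n k : ℚ) ≠ 0 := by
  obtain ⟨a, rfl⟩ := Nat.exists_eq_add_of_le hm
  obtain ⟨b, rfl⟩ := Nat.exists_eq_add_of_le hn
  rw [D_eq]
  have h1 : 0 < (a + b + 1 + k).choose k := Nat.choose_pos (by omega)
  have h2 : 0 < (a + b).choose a := Nat.choose_pos (by omega)
  exact_mod_cast (Nat.mul_pos h1 h2).ne'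

/-- The diagonal case: all factors `x + y` are moved to one side, where the alternating coefficients
of the top vector turn the signed sum into a Vandermonde convolution. -/
theorem pair_self {m n k t t' : ℕ} (hm : k ≤ m) (hn : k ≤ n) (hd : k + t + k + t' = m + n) :
    pair m (u m n k t) (u m n k t') = (-1) ^ k * D m n k := by
  obtain ⟨a, rfl⟩ := Nat.exists_eq_add_of_le hm
  obtain ⟨b, rfl⟩ := Nat.exists_eq_add_of_le hn
  rw [← pair_move, show t + t' = a + b by omega, D_eq, ← choose_convolution, pair,
    ← Finset.sum_range_reflect, ← Finset.sum_subset
      (Finset.range_mono (show k + 1 ≤ k + a + 1 by omega))]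
  · push_cast
    rw [Finset.sum_mul, Finset.mul_sum]
    refine Finset.sum_congr rfl fun l hl => ?_
    have hl' := Nat.lt_succ_iff.1 (Finset.mem_range.1 hl)
    rw [show ((k + a - l : ℕ) : ℤ) = (k + a : ℕ) - l by omega, u_alternating _ _ _ _ hl',
      u_top, show (k : ℤ) + a - ((k + a : ℕ) - l) = l by push_cast; ring]
    obtain ⟨d, rfl⟩ := Nat.exists_eq_add_of_le hl'
    rw [u, q_nat, Nat.add_sub_cancel_left]
    have : (-1 : ℚ) ^ l * (-1) ^ l = 1 := by rw [← mul_pow]; simp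
    push_cast
    linear_combination ((-1 : ℚ) ^ (l + d) * ((a + b).choose a : ℚ) * ((a + d).choose d : ℚ) *
      ((b + l).choose l : ℚ)) * this
  · intro l hl hl'
    simp only [Finset.mem_range] at hl hl'
    rw [u_of_lt _ _ _ 0 (by push_cast; omega), mul_zero]

/-! ### The second orthogonality relation -/

theorem orthogonality_nat (m n i j i' j' : ℕ) (him : i ≤ m) (hi'm : i' ≤ m) (hjn : j ≤ n)
    (hj'n : j' ≤ n) (hsum : i + j = i' + j') :
    ∑ k ∈ Finset.range (min m n + 1),
      (-1 : ℚ) ^ k * (c m n k i j : ℚ) * (c m n k (m - i' : ℕ) (n - j' : ℕ) : ℚ) / (D m n k : ℚ) =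
    if i = i' then 1 else 0 := by
  obtain ⟨s, hs⟩ : ∃ s, s = i + j := ⟨_, rfl⟩
  obtain ⟨s', hs'⟩ : ∃ s', s' = m + n - s := ⟨_, rfl⟩
  -- In degree `s` the monomials `x ^ i * y ^ (s - i)` with `i ≤ m`, `s - i ≤ n` are those with
  -- `i₀ ≤ i ≤ i₀ + K`, and the vectors `F ^ (s - k) Q_k` that exist are those with `k ≤ K`.
  obtain ⟨K, hK⟩ : ∃ K, K = min (min m n) (min s s') := ⟨_, rfl⟩
  obtain ⟨i₀, hi₀⟩ : ∃ i₀, i₀ = s - n := ⟨_, rfl⟩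
  let A : Matrix (Fin (K + 1)) (Fin (K + 1)) ℚ := fun p k => u m n k (s - k) (i₀ + p : ℕ)
  let B : Matrix (Fin (K + 1)) (Fin (K + 1)) ℚ := fun k p =>
    (-1) ^ (k : ℕ) / D m n k * u m n k (s' - k) (m - (i₀ + p : ℕ))
  have hBA : B * A = 1 := by
    ext k k'
    have hk := k.2
    have hk' := k'.2
    have hpair : (B * A) k k' = (-1) ^ (k : ℕ) / D m n k *
        pair m (u m n k' (s - k')) (u m n k (s' - k)) := by
      let f : ℕ → ℚ := fun x => u m n k' (s - k') x * u m n k (s' - k) (m - x)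
      have hf : ∑ x ∈ Finset.range (m + 1), f x = ∑ p : Fin (K + 1), f (i₀ + p) := by
        rw [← Finset.sum_range (fun p => f (i₀ + p))]
        have hI := Finset.sum_Ico_eq_sum_range f i₀ (i₀ + (K + 1))
        rw [Nat.add_sub_cancel_left] at hI
        rw [← hI, eq_comm]
        -- The degrees `s` and `s'` of the two factors force `s - n ≤ x ≤ s` in the support.
        refine Finset.sum_subset (fun x hx => ?_) (fun x hx hx' => ?_)
        · rw [Finset.mem_Ico] at hx
          rw [Finset.mem_range]
          omega
        · rw [Finset.mem_range] at hx
          rw [Finset.mem_Ico] at hx'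
          simp only [f]
          rcases lt_or_ge s x with h1 | h1
          · rw [u_of_lt m n k' _ (by omega), zero_mul]
          · rw [u_of_lt m n k _ (by omega), mul_zero]
      rw [Matrix.mul_apply]
      change _ = _ * ∑ x ∈ Finset.range (m + 1), f x
      rw [hf, Finset.mul_sum]
      refine Finset.sum_congr rfl fun p _ => ?_
      simp only [A, B, f]
      ring
    rw [hpair, Matrix.one_apply]
    split_ifs with h
    · subst h
      rw [pair_self (by omega) (by omega) (by omega)]
      have hD := D_ne_zero (m := m) (n := n) (k := k) (by omega) (by omega)
      have : (-1 : ℚ) ^ (k : ℕ) * (-1) ^ (k : ℕ) = 1 := by rw [← mul_pow]; simp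
      field_simp
      linear_combination this
    · rw [pair_of_ne (by omega) (by omega) (by omega) (by omega) (by omega)
        (fun e => h (Fin.ext e.symm)), mul_zero]
  have hAB : A * B = 1 := mul_eq_one_comm.1 hBA
  have h := congrFun (congrFun hAB ⟨i - i₀, by omega⟩) ⟨i' - i₀, by omega⟩
  rw [Matrix.mul_apply, Matrix.one_apply] at h
  simp only [Fin.mk.injEq] at h
  rw [← Finset.sum_subset (Finset.range_mono (show K + 1 ≤ min m n + 1 by omega)),
    Finset.sum_range]
  · have hii : i = i' ↔ i - i₀ = i' - i₀ := by omega
    simp only [hii]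
    rw [← h]
    refine Finset.sum_congr rfl fun k _ => ?_
    have hk := k.2
    rw [c_eq_u m n k (s - k) i j (by omega), c_eq_u m n k (s' - k) (m - i') (n - j') (by omega)]
    simp only [A, B]
    rw [show i₀ + (i - i₀) = i by omega, show i₀ + (i' - i₀) = i' by omega, Nat.cast_sub hi'm]
    ring
  -- For `K < k` one of the two coordinate functions vanishes identically.
  · intro k hk hk'
    simp only [Finset.mem_range] at hk hk'
    rcases lt_or_ge s k with h1 | h1
    · rw [c_eq_zero m n k i j (by omega)]; simp
    · rw [c_eq_zero m n k (m - i') (n - j') (by omega)]; simp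

theorem orthogonality_relations_second (m n i j i' j' : ℤ)
    (hm : 0 ≤ m) (hn : 0 ≤ n)
    (hi0 : 0 ≤ i) (him : i ≤ m) (hi'0 : 0 ≤ i') (hi'm : i' ≤ m)
    (hj0 : 0 ≤ j) (hjn : j ≤ n) (hj'0 : 0 ≤ j') (hj'n : j' ≤ n)
    (hsum : i + j = i' + j') :
    ∑ k ∈ Finset.range ((min m n).toNat + 1),
      (-1 : ℚ) ^ k * (c m n k i j : ℚ) * (c m n k (m - i') (n - j') : ℚ) / (D m n k : ℚ) =
    (if i = i' then 1 else 0) * (if j = j' then 1 else 0) := by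
  lift m to ℕ using hm
  lift n to ℕ using hn
  lift i to ℕ using hi0
  lift j to ℕ using hj0
  lift i' to ℕ using hi'0
  lift j' to ℕ using hj'0
  have h := orthogonality_nat m n i j i' j' (by omega) (by omega) (by omega) (by omega) (by omega)
  rw [Nat.cast_sub (by omega), Nat.cast_sub (by omega)] at h
  rw [show (min (m : ℤ) n).toNat = min m n by omega, h]
  by_cases e : i = i'
  · have e' : j = j' := by omega
    simp [e, e']
  · simp [e]
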